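/- arXiv:1608.08184 — 2 statements merged into one kernel-verified Lean document; each statement's English description precedes it below -/
import Mathlib

section
/- For every integer p ≥ 0, the L² norm on (−1,1) of the derivative of L_p − L_{p+1} satisfies ∫_{−1}^{1} ((L_p − L_{p+1})'(s))² ds = 2(p+1)². -/
/-!
Write `D = L_p - L_{p+1}`. One integration by parts turns `∫ (D')²` into the boundary term `[D D']`
minus `∫ D'' D`, and the last integral vanishes: `D''` has degree less than `p`, whereas `D` is
orthogonal to all polynomials of degree less than `p`. Since `D 1 = 0`, only the boundary term at
`-1` survives, where Rodrigues' formula gives `D (-1) = 2 (-1)^p` and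
`D' (-1) = -(-1)^p (p + 1)²`.
-/

open Polynomial

/-- The `k`-th Legendre polynomial (Rodrigues' formula), normalized so that `L_k(1) = 1`
and `∫_{−1}^{1} L_k L_j ds = 2δ_{kj}/(2k+1)`. -/
noncomputable def legendre (k : ℕ) : Polynomial ℝ :=
  ((2 ^ k * (Nat.factorial k) : ℝ))⁻¹ •
    ((fun q => Polynomial.derivative q)^[k] ((Polynomial.X ^ 2 - 1) ^ k))

/-- The reconstruction operator `I : P_p → P_{p+1}`,
`I v := v − v(−1)·(−1)^p (L_p − L_{p+1})/2`. -/
noncomputable def recon (p : ℕ) (v : Polynomial ℝ) : Polynomial ℝ :=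
  v - (v.eval (-1) * (-1 : ℝ) ^ p / 2) • (legendre p - legendre (p + 1))

section IteratedDerivative

variable {R : Type*} [CommRing R]

theorem eval_iterate_derivative_eq_factorial_mul_taylor_coeff (c : R) (n : ℕ) (f : R[X]) :
    (derivative^[n] f).eval c = n.factorial * (taylor c f).coeff n := by
  rw [taylor_coeff, ← factorial_smul_hasseDeriv, LinearMap.smul_apply, eval_smul, nsmul_eq_mul]

theorem eval_iterate_derivative_X_sub_C_pow_mul (c : R) (k m : ℕ) (f : R[X]) :
    (derivative^[m + k] ((X - C c) ^ k * f)).eval c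
      = (m + k).descFactorial k * (derivative^[m] f).eval c := by
  have htaylor : taylor c ((X - C c) ^ k * f) = X ^ k * taylor c f := by simp
  have hfactorial : (m + k).factorial = (m + k).descFactorial k * m.factorial := by
    rw [← Nat.factorial_mul_descFactorial (Nat.le_add_left k m), Nat.add_sub_cancel, mul_comm]
  rw [eval_iterate_derivative_eq_factorial_mul_taylor_coeff,
    eval_iterate_derivative_eq_factorial_mul_taylor_coeff, htaylor, coeff_X_pow_mul, hfactorial,
    Nat.cast_mul, mul_assoc]

theorem eval_iterate_derivative_eq_zero_of_X_sub_C_pow_dvd {c : R} {j k : ℕ} {f : R[X]}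
    (hj : j < k) (hf : (X - C c) ^ k ∣ f) : (derivative^[j] f).eval c = 0 :=
  dvd_iff_isRoot.mp <| (dvd_pow_self _ (Nat.sub_ne_zero_of_lt hj)).trans <|
    pow_sub_dvd_iterate_derivative_of_pow_dvd j hf

end IteratedDerivative

theorem integral_eval_mul_eval_derivative (a b : ℝ) (f g : ℝ[X]) :
    ∫ s in a..b, f.eval s * (derivative g).eval s
      = f.eval b * g.eval b - f.eval a * g.eval a - ∫ s in a..b, (derivative f).eval s * g.eval s :=
  intervalIntegral.integral_mul_deriv_eq_deriv_mul
    (fun s _ => f.hasDerivAt s) (fun s _ => g.hasDerivAt s)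
    ((derivative f).continuous.intervalIntegrable _ _)
    ((derivative g).continuous.intervalIntegrable _ _)

theorem integral_eval_mul_eval_iterate_derivative {a b : ℝ} (f : ℝ[X]) {g : ℝ[X]} {k : ℕ}
    (ha : (X - C a) ^ k ∣ g) (hb : (X - C b) ^ k ∣ g) :
    ∫ s in a..b, f.eval s * (derivative^[k] g).eval s
      = (-1) ^ k * ∫ s in a..b, (derivative^[k] f).eval s * g.eval s := by
  induction k generalizing f with
  | zero => simp
  | succ k ih =>
    have hpow (c : ℝ) : (X - C c) ^ k ∣ (X - C c) ^ (k + 1) := pow_dvd_pow _ k.le_succ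
    rw [Function.iterate_succ_apply', integral_eval_mul_eval_derivative,
      eval_iterate_derivative_eq_zero_of_X_sub_C_pow_dvd k.lt_succ_self ha,
      eval_iterate_derivative_eq_zero_of_X_sub_C_pow_dvd k.lt_succ_self hb,
      ih (derivative f) ((hpow a).trans ha) ((hpow b).trans hb), ← Function.iterate_succ_apply]
    ring

theorem X_sq_sub_one_pow_eq_mul {R : Type*} [CommRing R] {c : R} (hc : c ^ 2 = 1) (k : ℕ) :
    ((X ^ 2 - 1) ^ k : R[X]) = (X - C c) ^ k * (X + C c) ^ k := by
  have hC : (C c : R[X]) ^ 2 = 1 := by rw [← C_pow, hc, C_1]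
  rw [← mul_pow, ← hC, sq_sub_sq, mul_comm]

theorem legendre_eq_smul_iterate_derivative (k : ℕ) :
    legendre k = ((2 ^ k * k.factorial : ℝ))⁻¹ • derivative^[k] ((X ^ 2 - 1) ^ k) :=
  rfl

theorem natDegree_legendre_le (k : ℕ) : (legendre k).natDegree ≤ k := by
  have hpow : ((X ^ 2 - 1) ^ k : ℝ[X]).natDegree ≤ k * 2 :=
    natDegree_pow_le_of_le k (by compute_degree)
  calc (legendre k).natDegree
      ≤ (derivative^[k] ((X ^ 2 - 1) ^ k : ℝ[X])).natDegree := natDegree_smul_le _ _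
    _ ≤ ((X ^ 2 - 1) ^ k : ℝ[X]).natDegree - k := natDegree_iterate_derivative _ k
    _ ≤ k := by omega

theorem eval_legendre_of_sq_eq_one {c : ℝ} (hc : c ^ 2 = 1) (k : ℕ) :
    (legendre k).eval c = c ^ k := by
  have hrodrigues := eval_iterate_derivative_X_sub_C_pow_mul c k 0 ((X + C c) ^ k)
  rw [zero_add, Nat.descFactorial_self, Function.iterate_zero_apply] at hrodrigues
  rw [legendre_eq_smul_iterate_derivative, eval_smul, X_sq_sub_one_pow_eq_mul hc, hrodrigues]
  simp only [eval_pow, eval_add, eval_X, eval_C, smul_eq_mul, ← two_mul, mul_pow]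
  field_simp

theorem eval_derivative_legendre_of_sq_eq_one {c : ℝ} (hc : c ^ 2 = 1) (k : ℕ) :
    (derivative (legendre k)).eval c = k * (k + 1) / 2 * c ^ (k + 1) := by
  have hrodrigues := eval_iterate_derivative_X_sub_C_pow_mul c k 1 ((X + C c) ^ k)
  have hdesc : (k + 1).descFactorial k = (k + 1) * k.factorial := by
    simpa [Nat.factorial_succ] using Nat.factorial_mul_descFactorial k.le_succ
  rw [add_comm 1 k, hdesc, Function.iterate_succ_apply', Function.iterate_one,
    derivative_X_add_C_pow] at hrodrigues
  rw [legendre_eq_smul_iterate_derivative, derivative_smul, eval_smul, X_sq_sub_one_pow_eq_mul hc,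
    hrodrigues]
  cases k with
  | zero => simp
  | succ n =>
    have hpow : c ^ (n + 1 + 1) = c ^ n := by rw [add_assoc, pow_add, hc, mul_one]
    simp only [eval_mul, eval_pow, eval_add, eval_X, eval_C, smul_eq_mul, ← two_mul, mul_pow, hpow,
      Nat.add_sub_cancel]
    push_cast
    field_simp
    ring

theorem eval_one_legendre_sub_succ (p : ℕ) : (legendre p - legendre (p + 1)).eval 1 = 0 := by
  simp [eval_legendre_of_sq_eq_one (one_pow 2)]

theorem eval_neg_one_legendre_sub_succ (p : ℕ) :
    (legendre p - legendre (p + 1)).eval (-1) = 2 * (-1) ^ p := by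
  rw [eval_sub, eval_legendre_of_sq_eq_one neg_one_sq, eval_legendre_of_sq_eq_one neg_one_sq]
  ring

theorem eval_neg_one_derivative_legendre_sub_succ (p : ℕ) :
    (derivative (legendre p - legendre (p + 1))).eval (-1) = -(-1) ^ p * ((p : ℝ) + 1) ^ 2 := by
  rw [derivative_sub, eval_sub, eval_derivative_legendre_of_sq_eq_one neg_one_sq,
    eval_derivative_legendre_of_sq_eq_one neg_one_sq]
  push_cast
  ring

theorem integral_eval_mul_eval_legendre (k : ℕ) (q : ℝ[X]) :
    ∫ s in (-1 : ℝ)..1, q.eval s * (legendre k).eval s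
      = (2 ^ k * k.factorial : ℝ)⁻¹ * ((-1) ^ k *
        ∫ s in (-1 : ℝ)..1, (derivative^[k] q).eval s * (s ^ 2 - 1) ^ k) := by
  have hdvd {c : ℝ} (hc : c ^ 2 = 1) : (X - C c) ^ k ∣ ((X ^ 2 - 1) ^ k : ℝ[X]) :=
    Dvd.intro _ (X_sq_sub_one_pow_eq_mul hc k).symm
  have hparts := integral_eval_mul_eval_iterate_derivative q
    (hdvd (c := -1) (by norm_num)) (hdvd (c := 1) (by norm_num))
  simp only [eval_pow, eval_sub, eval_X, eval_one] at hparts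
  simp only [legendre_eq_smul_iterate_derivative, eval_smul, smul_eq_mul, mul_left_comm (q.eval _),
    intervalIntegral.integral_const_mul, hparts]

theorem integral_eval_mul_eval_legendre_eq_zero {k : ℕ} {q : ℝ[X]} (hq : derivative^[k] q = 0) :
    ∫ s in (-1 : ℝ)..1, q.eval s * (legendre k).eval s = 0 := by
  simp [integral_eval_mul_eval_legendre, hq]

theorem integral_eval_mul_eval_legendre_sub_succ_eq_zero {p : ℕ} {q : ℝ[X]}
    (hq : derivative^[p] q = 0) :
    ∫ s in (-1 : ℝ)..1, q.eval s * (legendre p - legendre (p + 1)).eval s = 0 := by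
  have hq' : derivative^[p + 1] q = 0 := by
    rw [Function.iterate_succ_apply', hq, derivative_zero]
  simp only [eval_sub, mul_sub]
  rw [intervalIntegral.integral_sub, integral_eval_mul_eval_legendre_eq_zero hq,
    integral_eval_mul_eval_legendre_eq_zero hq', sub_zero]
  all_goals exact Continuous.intervalIntegrable (by fun_prop) _ _

theorem iterate_derivative_legendre_sub_succ_eq_zero (p : ℕ) :
    derivative^[p + 2] (legendre p - legendre (p + 1)) = 0 := by
  have hdeg : (legendre p - legendre (p + 1)).natDegree ≤ p + 1 :=
    natDegree_sub_le_of_le ((natDegree_legendre_le p).trans p.le_succ) (natDegree_legendre_le _)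
      |>.trans (max_self _).le
  exact iterate_derivative_eq_zero (Nat.lt_succ_of_le hdeg)

/-- For every integer `p ≥ 0`, `∫_{−1}^{1} ((L_p − L_{p+1})'(s))² ds = 2(p+1)²`. -/
theorem legendre_diff_deriv_norm (p : ℕ) :
    (∫ s in (-1 : ℝ)..1, ((Polynomial.derivative (legendre p - legendre (p + 1))).eval s) ^ 2)
      = 2 * ((p : ℝ) + 1) ^ 2 := by
  set D := legendre p - legendre (p + 1)
  have horth : ∫ s in (-1 : ℝ)..1, (derivative (derivative D)).eval s * D.eval s = 0 :=
    integral_eval_mul_eval_legendre_sub_succ_eq_zero <|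
      iterate_derivative_legendre_sub_succ_eq_zero p
  calc ∫ s in (-1 : ℝ)..1, (derivative D).eval s ^ 2
      = ∫ s in (-1 : ℝ)..1, (derivative D).eval s * (derivative D).eval s := by simp only [sq]
    _ = (derivative D).eval 1 * D.eval 1 - (derivative D).eval (-1) * D.eval (-1) := by
      rw [integral_eval_mul_eval_derivative, horth, sub_zero]
    _ = 2 * ((-1) ^ p * (-1) ^ p) * ((p : ℝ) + 1) ^ 2 := by
      rw [eval_one_legendre_sub_succ, eval_neg_one_legendre_sub_succ,
        eval_neg_one_derivative_legendre_sub_succ]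
      ring
    _ = 2 * ((p : ℝ) + 1) ^ 2 := by rw [pow_mul_pow_eq_one p (by norm_num), mul_one]
end

section
/- Let p ≥ 2. Let Z be the (p+1)×(p+1) matrix with ψ_k = Σ_{j=0}^p Z_{kj} L_j, let D := diag{2/(2j+1)}_{j=0}^p, and let T := Z D Zᵀ. Let V be an orthogonal (p+1)×(p+1) matrix with T V = V diag{λ_j}_{j=0}^p, and define the eigenfunctions φ_j := Σ_{k=0}^p V_{kj} ψ_k. Define K* := K̃ − x yᵀ, where K̃_{kj} := (1 − (−1)^{k−j})(j + 1/2) if j ≤ k and 0 otherwise, x_j := (−1)^j, and y_k := (−1)^{1−k}(k + 1/2). Then for each k = 0, …, p, (I φ_k)' = Σ_{j=0}^p K_{kj} φ_j, where K := Vᵀ D^{−1/2} K* D^{1/2} V. -/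
open Polynomial Matrix

/-- The basis polynomials `ψ_0 := (L_1 + L_0)/√2`,
`ψ_k := (L_{k+1} − L_{k−1})/√(4k+2)` for `1 ≤ k ≤ p−1`, and
`ψ_p := (L_p − L_{p−1})/√(4p+2)`. -/
noncomputable def psi (p k : ℕ) : Polynomial ℝ :=
  if k = 0 then (Real.sqrt 2)⁻¹ • (legendre 1 + legendre 0)
  else if k = p then (Real.sqrt (4 * (p : ℝ) + 2))⁻¹ • (legendre p - legendre (p - 1))
  else (Real.sqrt (4 * (k : ℝ) + 2))⁻¹ • (legendre (k + 1) - legendre (k - 1))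

/-- The matrix `K̃`, with `K̃_{kj} := (1 − (−1)^{k−j})(j + 1/2)` if `j ≤ k` and `0`
otherwise. -/
noncomputable def Ktilde (p : ℕ) : Matrix (Fin (p + 1)) (Fin (p + 1)) ℝ :=
  Matrix.of fun (k j : Fin (p + 1)) =>
    if (j : ℕ) ≤ (k : ℕ) then (1 - (-1 : ℝ) ^ ((k : ℕ) - (j : ℕ))) * ((j : ℝ) + 1 / 2) else 0

/-- The matrix `K* := K̃ − x yᵀ`, with `x_j := (−1)^j` and `y_k := (−1)^{1−k}(k + 1/2)`. -/
noncomputable def Kstar (p : ℕ) : Matrix (Fin (p + 1)) (Fin (p + 1)) ℝ :=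
  Ktilde p - Matrix.of fun (k j : Fin (p + 1)) =>
    ((-1 : ℝ) ^ (k : ℕ)) * ((-1 : ℝ) ^ ((1 : ℤ) - (j : ℤ)) * ((j : ℝ) + 1 / 2))

/-- `D^{1/2} = diag{√(2/(2j+1))}`. -/
noncomputable def Dhalf (p : ℕ) : Matrix (Fin (p + 1)) (Fin (p + 1)) ℝ :=
  Matrix.diagonal fun j : Fin (p + 1) => Real.sqrt (2 / (2 * (j : ℝ) + 1))

/-- `D^{−1/2} = diag{√(2/(2j+1))⁻¹}`. -/
noncomputable def DhalfInv (p : ℕ) : Matrix (Fin (p + 1)) (Fin (p + 1)) ℝ :=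
  Matrix.diagonal fun j : Fin (p + 1) => (Real.sqrt (2 / (2 * (j : ℝ) + 1)))⁻¹

/-!
Up to the scaling `χ_k := D_k^{1/2} ψ_k`, the basis is built from the antiderivatives
`A_k := ∫_{-1}^x L_k`: one has `χ_k = A_k` for `k < p`, while `χ_p` differs from `A_p` by exactly
the correction made by `I`. So `(I χ_k)' = L_k` for all `k ≤ p`, and it remains to see that
`L_k = ∑_j K*_{kj} χ_j`. As `(2j+1) A_j = L_{j+1} - L_{j-1}` for `j ≥ 1`, sums of `(2j+1) χ_j`
telescope. The last row of `K*` is `j + 1/2`, which gives `L_p`; two consecutive rows `k`, `k + 1`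
add up to `2j+1` on `j ≤ k` and `0` beyond, which gives `L_k + L_{k+1}`. Downward induction on `k`
settles all rows, and a change of basis does the rest.
-/

theorem sum_smul_sum_smul_eq_sum_mul_smul {R M l m n : Type*} [Semiring R] [AddCommMonoid M]
    [Module R M] [Fintype m] [Fintype n] (A : Matrix l m R) (B : Matrix m n R) (v : n → M)
    (k : l) : ∑ i, A k i • ∑ j, B i j • v j = ∑ j, (A * B) k j • v j := by
  simp_rw [Matrix.mul_apply, Finset.smul_sum, Finset.sum_smul, mul_smul]
  exact Finset.sum_comm

theorem map_sum_smul_eq_of_mul_eq_one {R M ι κ : Type*} [Semiring R] [AddCommMonoid M]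
    [Module R M] [Fintype ι] [DecidableEq ι] [Fintype κ] {f : M →ₗ[R] M} {v : ι → M}
    {A : Matrix ι ι R} (hf : ∀ i, f (v i) = ∑ j, A i j • v j) (P : Matrix κ ι R)
    {Q : Matrix ι κ R} (hQP : Q * P = 1) (k : κ) :
    f (∑ i, P k i • v i) = ∑ j, (P * A * Q) k j • ∑ i, P j i • v i := by
  calc
    f (∑ i, P k i • v i) = ∑ i, P k i • ∑ j, A i j • v j := by simp only [map_sum, map_smul, hf]
    _ = ∑ i, (P * A) k i • v i := sum_smul_sum_smul_eq_sum_mul_smul ..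
    _ = ∑ i, (P * A * Q * P) k i • v i := by rw [Matrix.mul_assoc _ Q, hQP, Matrix.mul_one]
    _ = ∑ j, (P * A * Q) k j • ∑ i, P j i • v i :=
      (sum_smul_sum_smul_eq_sum_mul_smul ..).symm

theorem iterate_derivative_X_sq_sub_one_pow_add_two (R : Type*) [CommRing R] (k m : ℕ) :
    derivative^[m + 2] ((X ^ 2 - 1 : R[X]) ^ (k + 2))
      = (2 * (k + 2) * (2 * k + 3)) • derivative^[m] ((X ^ 2 - 1) ^ (k + 1))
        + (4 * (k + 2) * (k + 1)) • derivative^[m] ((X ^ 2 - 1) ^ k) := by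
  have htwice : derivative^[2] ((X ^ 2 - 1 : R[X]) ^ (k + 2))
      = (2 * (k + 2) * (2 * k + 3)) • (X ^ 2 - 1) ^ (k + 1)
        + (4 * (k + 2) * (k + 1)) • (X ^ 2 - 1) ^ k := by
    simp only [Function.iterate_succ, Function.iterate_zero, Function.comp_apply, id_eq,
      derivative_pow, derivative_mul, derivative_sub, derivative_X, derivative_one, derivative_zero,
      derivative_natCast, add_tsub_cancel_right, Nat.add_one_sub_one, nsmul_eq_mul, map_natCast]
    push_cast
    ring
  rw [Function.iterate_add_apply, htwice, iterate_map_add, iterate_derivative_smul,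
    iterate_derivative_smul]

theorem legendre_zero : legendre 0 = 1 := by simp [legendre]

theorem legendre_one : legendre 1 = X := by
  simp [legendre, one_add_one_eq_two, smul_eq_C_mul, ← mul_assoc, ← C_mul]

theorem legendre_eval_neg_one (k : ℕ) : (legendre k).eval (-1) = (-1) ^ k := by
  have hfactor : ((X ^ 2 - 1 : ℝ[X]) ^ k).map (algebraMap ℝ ℝ)
      = (X - C (-1)) ^ k * (X - 1) ^ k := by
    rw [Algebra.algebraMap_self, Polynomial.map_id, ← mul_pow, C_neg, C_1]
    ring
  have hderiv : (derivative^[k] ((X ^ 2 - 1 : ℝ[X]) ^ k)).eval (-1) = k.factorial * (-2) ^ k := by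
    rw [← coe_aeval_eq_eval, aeval_iterate_derivative_self _ k (-1) hfactor, nsmul_eq_mul]
    norm_num
  rw [legendre, eval_smul, hderiv, smul_eq_mul, neg_pow (2 : ℝ)]
  field_simp

theorem derivative_legendre_add_two (k : ℕ) :
    derivative (legendre (k + 2))
      = (2 * (k + 1 : ℕ) + 1 : ℝ) • legendre (k + 1) + derivative (legendre k) := by
  have hD := iterate_derivative_X_sq_sub_one_pow_add_two ℝ k (k + 1)
  rw [Function.iterate_succ_apply' _ (k + 2), Function.iterate_succ_apply' _ k ((X ^ 2 - 1) ^ k),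
    ← Nat.cast_smul_eq_nsmul ℝ, ← Nat.cast_smul_eq_nsmul ℝ] at hD
  simp only [legendre, derivative_smul, hD, smul_add, smul_smul]
  congr 2 <;> simp only [Nat.factorial_succ] <;> push_cast <;> field_simp <;> ring

/-- The antiderivative `∫_{-1}^x L_k` of the `k`-th Legendre polynomial, expressed through the
neighbours of `L_k`. -/
noncomputable def legendreAntideriv : ℕ → ℝ[X]
  | 0 => legendre 1 + legendre 0
  | k + 1 => (2 * (k + 1 : ℕ) + 1 : ℝ)⁻¹ • (legendre (k + 2) - legendre k)

theorem derivative_legendreAntideriv (k : ℕ) : derivative (legendreAntideriv k) = legendre k := by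
  cases k with
  | zero => simp [legendreAntideriv, legendre_zero, legendre_one]
  | succ k =>
    rw [legendreAntideriv, derivative_smul, derivative_sub, derivative_legendre_add_two,
      add_sub_cancel_right, inv_smul_smul₀ (by positivity)]

theorem legendreAntideriv_eval_neg_one (k : ℕ) : (legendreAntideriv k).eval (-1) = 0 := by
  cases k with
  | zero => simp [legendreAntideriv, legendre_eval_neg_one]
  | succ k => simp [legendreAntideriv, legendre_eval_neg_one, pow_add]

theorem sum_range_smul_legendreAntideriv (n : ℕ) :
    ∑ j ∈ Finset.range (n + 1), (2 * j + 1 : ℝ) • legendreAntideriv j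
      = legendre (n + 1) + legendre n := by
  induction n with
  | zero => simp [legendreAntideriv]
  | succ n ih =>
    rw [Finset.sum_range_succ, ih, legendreAntideriv, smul_inv_smul₀ (by positivity)]
    abel

theorem recon_eq_self_of_eval_eq_zero (p : ℕ) {v : ℝ[X]} (hv : v.eval (-1) = 0) :
    recon p v = v := by
  simp [recon, hv]

/-- The operator `v ↦ (I v)'` as a linear map. -/
noncomputable def reconDeriv (p : ℕ) : ℝ[X] →ₗ[ℝ] ℝ[X] where
  toFun v := derivative (recon p v)
  map_add' u v := by
    rw [← derivative_add]
    simp only [recon, eval_add]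
    congr 1
    module
  map_smul' c v := by
    rw [RingHom.id_apply, ← derivative_smul]
    simp only [recon, eval_smul, smul_eq_mul]
    congr 1
    module

/-- The rescaled basis polynomial `χ_k := √(2/(2k+1)) ψ_k`, free of square roots. -/
noncomputable def scaledPsi (p k : ℕ) : ℝ[X] := √(2 / (2 * (k : ℝ) + 1)) • psi p k

theorem sqrt_two_div_mul_inv_sqrt {x : ℝ} (hx : 0 < 2 * x + 1) :
    √(2 / (2 * x + 1)) * (√(4 * x + 2))⁻¹ = (2 * x + 1)⁻¹ := by
  have hquot : 2 / (2 * x + 1) / (4 * x + 2) = (2 * x + 1)⁻¹ ^ 2 := by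
    rw [show 4 * x + 2 = 2 * (2 * x + 1) by ring]
    field_simp
  rw [← div_eq_mul_inv, ← Real.sqrt_div (by positivity), hquot, Real.sqrt_sq (by positivity)]

theorem scaledPsi_of_lt {p k : ℕ} (hk : k < p) : scaledPsi p k = legendreAntideriv k := by
  cases k with
  | zero => simp [scaledPsi, psi, legendreAntideriv, smul_smul]
  | succ k =>
    rw [scaledPsi, psi, if_neg k.succ_ne_zero, if_neg hk.ne, smul_smul,
      sqrt_two_div_mul_inv_sqrt (by positivity), legendreAntideriv, Nat.add_sub_cancel]

theorem scaledPsi_succ_self (q : ℕ) :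
    scaledPsi (q + 1) (q + 1)
      = (2 * (q + 1 : ℕ) + 1 : ℝ)⁻¹ • (legendre (q + 1) - legendre q) := by
  rw [scaledPsi, psi, if_neg q.succ_ne_zero, if_pos rfl, smul_smul,
    sqrt_two_div_mul_inv_sqrt (by positivity), Nat.add_sub_cancel]

theorem recon_scaledPsi_succ_self (q : ℕ) :
    recon (q + 1) (scaledPsi (q + 1) (q + 1)) = legendreAntideriv (q + 1) := by
  have hcoeff : (scaledPsi (q + 1) (q + 1)).eval (-1) * (-1) ^ (q + 1) / 2
      = (2 * (q + 1 : ℕ) + 1 : ℝ)⁻¹ := by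
    have hsq : ((-1 : ℝ) ^ q) ^ 2 = 1 := by rw [← pow_mul, mul_comm, pow_mul]; simp
    simp only [scaledPsi_succ_self, eval_smul, eval_sub, legendre_eval_neg_one, smul_eq_mul]
    linear_combination (2 * (q + 1 : ℕ) + 1 : ℝ)⁻¹ * hsq
  rw [recon, hcoeff, scaledPsi_succ_self, legendreAntideriv]
  module

theorem recon_scaledPsi {p k : ℕ} (hp : p ≠ 0) (hk : k ≤ p) :
    recon p (scaledPsi p k) = legendreAntideriv k := by
  rcases hk.lt_or_eq with hlt | rfl
  · rw [scaledPsi_of_lt hlt,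
      recon_eq_self_of_eval_eq_zero p (legendreAntideriv_eval_neg_one k)]
  · obtain ⟨q, rfl⟩ := Nat.exists_eq_succ_of_ne_zero hp
    exact recon_scaledPsi_succ_self q

theorem sum_range_smul_scaledPsi_of_lt {p k : ℕ} (hk : k < p) :
    ∑ j ∈ Finset.range (k + 1), (2 * j + 1 : ℝ) • scaledPsi p j
      = legendre (k + 1) + legendre k := by
  rw [← sum_range_smul_legendreAntideriv]
  refine Finset.sum_congr rfl fun j hj ↦ ?_
  rw [scaledPsi_of_lt ((Finset.mem_range_succ_iff.mp hj).trans_lt hk)]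

theorem sum_range_smul_scaledPsi_self {p : ℕ} (hp : p ≠ 0) :
    ∑ j ∈ Finset.range (p + 1), (2 * j + 1 : ℝ) • scaledPsi p j = (2 : ℝ) • legendre p := by
  obtain ⟨q, rfl⟩ := Nat.exists_eq_succ_of_ne_zero hp
  rw [Finset.sum_range_succ, sum_range_smul_scaledPsi_of_lt q.lt_succ_self, scaledPsi_succ_self,
    smul_inv_smul₀ (by positivity)]
  module

theorem Kstar_last (p : ℕ) (j : Fin (p + 1)) : Kstar p (Fin.last p) j = (j : ℝ) + 1 / 2 := by
  have hsign : (-1 : ℝ) ^ p * (-1) ^ ((1 : ℤ) - (j : ℤ)) = -(-1) ^ (p - (j : ℕ)) := by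
    rw [zpow_sub₀ (by norm_num), zpow_one, zpow_natCast, pow_sub₀ _ (by norm_num) j.is_le]
    ring
  simp only [Kstar, Ktilde, Matrix.sub_apply, Matrix.of_apply, Fin.val_last, if_pos j.is_le]
  linear_combination -((j : ℝ) + 1 / 2) * hsign

theorem Kstar_castSucc_add_succ {p : ℕ} (k : Fin p) (j : Fin (p + 1)) :
    Kstar p k.castSucc j + Kstar p k.succ j = if (j : ℕ) ≤ k then 2 * (j : ℝ) + 1 else 0 := by
  simp only [Kstar, Ktilde, Matrix.sub_apply, Matrix.of_apply, Fin.val_castSucc, Fin.val_succ,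
    pow_succ (-1 : ℝ) k]
  rcases lt_trichotomy (j : ℕ) (k + 1) with hlt | heq | hgt
  · rw [if_pos (by omega), if_pos (by omega), if_pos (by omega), Nat.succ_sub (by omega), pow_succ]
    ring
  · rw [if_neg (by omega), if_pos (by omega), if_neg (by omega), heq, Nat.sub_self, pow_zero]
    ring
  · rw [if_neg (by omega), if_neg (by omega), if_neg (by omega)]
    ring

theorem sum_Kstar_castSucc_add_sum_Kstar_succ {p : ℕ} (k : Fin p) :
    ∑ j : Fin (p + 1), Kstar p k.castSucc j • scaledPsi p j
      + ∑ j : Fin (p + 1), Kstar p k.succ j • scaledPsi p j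
      = legendre (k + 1) + legendre k := by
  simp_rw [← Finset.sum_add_distrib, ← add_smul, Kstar_castSucc_add_succ, ite_smul, zero_smul]
  rw [Fin.sum_univ_eq_sum_range
      (fun j ↦ if j ≤ (k : ℕ) then (2 * j + 1 : ℝ) • scaledPsi p j else 0),
    ← Finset.sum_filter, ← sum_range_smul_scaledPsi_of_lt k.is_lt]
  congr 1
  ext j
  simp only [Finset.mem_filter, Finset.mem_range]
  omega

theorem sum_Kstar_smul_scaledPsi {p : ℕ} (hp : p ≠ 0) (k : Fin (p + 1)) :
    ∑ j : Fin (p + 1), Kstar p k j • scaledPsi p j = legendre k := by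
  induction k using Fin.reverseInduction with
  | last =>
    have hhalf (j : Fin (p + 1)) : Kstar p (Fin.last p) j • scaledPsi p j
        = (1 / 2 : ℝ) • (2 * (j : ℝ) + 1) • scaledPsi p j := by
      rw [Kstar_last, smul_smul]
      ring_nf
    rw [Finset.sum_congr rfl fun j _ ↦ hhalf j, ← Finset.smul_sum,
      Fin.sum_univ_eq_sum_range (fun j ↦ (2 * j + 1 : ℝ) • scaledPsi p j),
      sum_range_smul_scaledPsi_self hp, Fin.val_last]
    module
  | cast k ih =>
    have hpair := sum_Kstar_castSucc_add_sum_Kstar_succ k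
    rw [ih, Fin.val_succ, add_comm] at hpair
    exact add_left_cancel hpair

theorem reconDeriv_scaledPsi {p : ℕ} (hp : p ≠ 0) (k : Fin (p + 1)) :
    reconDeriv p (scaledPsi p k) = ∑ j : Fin (p + 1), Kstar p k j • scaledPsi p j := by
  rw [sum_Kstar_smul_scaledPsi hp, ← derivative_legendreAntideriv, ← recon_scaledPsi hp k.is_le]
  rfl

theorem reconDeriv_psi {p : ℕ} (hp : p ≠ 0) (k : Fin (p + 1)) :
    reconDeriv p (psi p k)
      = ∑ j : Fin (p + 1), (DhalfInv p * Kstar p * Dhalf p) k j • psi p j := by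
  have hpsi : psi p k = (√(2 / (2 * (k : ℝ) + 1)))⁻¹ • scaledPsi p k := by
    rw [scaledPsi, inv_smul_smul₀ (by positivity)]
  rw [hpsi, map_smul, reconDeriv_scaledPsi hp, Finset.smul_sum]
  refine Finset.sum_congr rfl fun j _ ↦ ?_
  rw [DhalfInv, Dhalf, Matrix.mul_diagonal, Matrix.diagonal_mul, scaledPsi, smul_smul, smul_smul]

theorem recon_deriv_eigenbasis_general {ι : Type*} [Fintype ι] {p : ℕ} (hp : p ≠ 0)
    (V : Matrix (Fin (p + 1)) ι ℝ) {W : Matrix ι (Fin (p + 1)) ℝ} (hVW : V * W = 1) (k : ι) :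
    derivative (recon p (∑ i : Fin (p + 1), V i k • psi p i))
      = ∑ j : ι, (Vᵀ * DhalfInv p * Kstar p * Dhalf p * Wᵀ) k j •
          ∑ i : Fin (p + 1), V i j • psi p i := by
  have hWV : Wᵀ * Vᵀ = 1 := by rw [← Matrix.transpose_mul, hVW, Matrix.transpose_one]
  have hmap := map_sum_smul_eq_of_mul_eq_one (reconDeriv_psi hp) Vᵀ hWV k
  simp only [← Matrix.mul_assoc] at hmap
  exact hmap

/-- **Lemma (representation of the reconstruction derivative in the eigenbasis).** Let
`p ≥ 2`, let `Z` be the matrix with `ψ_k = Σ_j Z_{kj} L_j`, let `D := diag{2/(2j+1)}`,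
`T := Z D Zᵀ`, and let `V` be orthogonal with `T V = V diag{λ_j}`. Define the eigenfunctions
`φ_j := Σ_k V_{kj} ψ_k`. Then for each `k = 0, …, p`, `(I φ_k)' = Σ_j K_{kj} φ_j`, where
`K := Vᵀ D^{−1/2} K* D^{1/2} V`. -/
theorem recon_deriv_eigenbasis (p : ℕ) (hp : 2 ≤ p)
    (Z V : Matrix (Fin (p + 1)) (Fin (p + 1)) ℝ) (lam : Fin (p + 1) → ℝ)
    (hZ : ∀ k : Fin (p + 1), psi p (k : ℕ) = ∑ j : Fin (p + 1), Z k j • legendre (j : ℕ))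
    (hV₁ : Vᵀ * V = 1) (hV₂ : V * Vᵀ = 1)
    (hTV : (Z * Matrix.diagonal (fun j : Fin (p + 1) => 2 / (2 * (j : ℝ) + 1)) * Zᵀ) * V
        = V * Matrix.diagonal lam) :
    ∀ k : Fin (p + 1),
      Polynomial.derivative (recon p (∑ i : Fin (p + 1), V i k • psi p (i : ℕ)))
        = ∑ j : Fin (p + 1),
            (Vᵀ * DhalfInv p * Kstar p * Dhalf p * V) k j •
              ∑ i : Fin (p + 1), V i j • psi p (i : ℕ) := by
  exact recon_deriv_eigenbasis_general (by omega) V hV₂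
end
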